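/- Variation-of-constants formula for the second-order error (Lemma 2, equation (32)). Let θ be a linear QSA process and ν̃(t) = (t+1)θ(t) − ξ^I(t). Then for all t ≥ 0: ν̃(t) = S(t;0)·θ(0) + ∫₀^t (1/(r+1))·S(t;r)·Ā·ξ^I(r) dr. -/

import Mathlib

open intervalIntegral

/-!
With `Ā = 1 + A`, the equation for `θ` reads `((t + 1) θ)' = Ā θ + ξ`. Integrating, the noise
enters only through its primitive, so `ν̃ = θ(0) + ∫ Ā θ` is continuously differentiable even where
`ξ` is merely integrable. Substituting `θ = (ν̃ + ξ^I) / (t + 1)` into `ν̃' = Ā θ` gives the linear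
equation `ν̃' = (Ā ν̃ + Ā ξ^I) / (t + 1)`, whose homogeneous part has transition operator `S`. The
formula is then obtained by integrating `r ↦ S(t; r) ν̃(r)`, whose derivative no longer contains
`ν̃`.
-/

open MeasureTheory Set

section StateTransition

variable {𝔸 : Type*} [NormedRing 𝔸] [NormedAlgebra ℝ 𝔸]

/-- The state transition operator `S(t; r) = exp (log ((1 + t) / (1 + r)) • B)` of the equation
`x' = (1 / (t + 1)) • B x`. -/
noncomputable def stateTransition (B : 𝔸) (t r : ℝ) : 𝔸 :=
  NormedSpace.exp (Real.log ((1 + t) / (1 + r)) • B)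

theorem stateTransition_self (B : 𝔸) {t : ℝ} (ht : 1 + t ≠ 0) : stateTransition B t t = 1 := by
  rw [stateTransition, div_self ht, Real.log_one, zero_smul, NormedSpace.exp_zero]

theorem hasDerivAt_log_div_one_add {t r : ℝ} (ht : 1 + t ≠ 0) (hr : 1 + r ≠ 0) :
    HasDerivAt (fun r ↦ Real.log ((1 + t) / (1 + r))) (-(1 / (r + 1))) r := by
  have hquot : HasDerivAt (fun r ↦ (1 + t) / (1 + r)) (-(1 + t) / (1 + r) ^ 2) r := by
    simpa using (hasDerivAt_const r (1 + t)).fun_div ((hasDerivAt_id' r).const_add 1) hr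
  refine (hquot.log (div_ne_zero ht hr)).congr_deriv ?_
  rw [add_comm r 1]
  field_simp

theorem hasDerivAt_stateTransition [CompleteSpace 𝔸] (B : 𝔸) {t r : ℝ} (ht : 1 + t ≠ 0)
    (hr : 1 + r ≠ 0) :
    HasDerivAt (stateTransition B t) (-(1 / (r + 1)) • (stateTransition B t r * B)) r :=
  (hasDerivAt_exp_smul_const B _).scomp r (hasDerivAt_log_div_one_add ht hr)

variable {E : Type*} [NormedAddCommGroup E] [NormedSpace ℝ E] [CompleteSpace E]

theorem eq_stateTransition_add_integral {B : E →L[ℝ] E} {ν g : ℝ → E} {s t : ℝ} (hs : -1 < s)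
    (hst : s ≤ t) (hν : ContinuousOn ν (Icc s t)) (hg : ContinuousOn g (Icc s t))
    (hν' : ∀ r ∈ Ioo s t, HasDerivAt ν ((1 / (r + 1)) • (B (ν r) + g r)) r) :
    ν t = stateTransition B t s (ν s)
      + ∫ r in s..t, (1 / (r + 1)) • stateTransition B t r (g r) := by
  have one_add_ne {r : ℝ} (hr : s ≤ r) : 1 + r ≠ 0 := by linarith
  have hS {r : ℝ} (hr : s ≤ r) := hasDerivAt_stateTransition B (one_add_ne hst) (one_add_ne hr)
  have hScont : ContinuousOn (stateTransition B t) (Icc s t) :=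
    fun r hr ↦ (hS hr.1).continuousAt.continuousWithinAt
  have hderiv : ∀ r ∈ Ioo s t, HasDerivAt (fun r ↦ stateTransition B t r (ν r))
      ((1 / (r + 1)) • stateTransition B t r (g r)) r := fun r hr ↦ by
    refine ((hS hr.1.le).clm_apply (hν' r hr)).congr_deriv ?_
    simp only [smul_apply, mul_apply_eq_comp, map_smul, map_add]
    module
  have hint : IntervalIntegrable (fun r ↦ (1 / (r + 1)) • stateTransition B t r (g r))
      volume s t := by
    refine ContinuousOn.intervalIntegrable_of_Icc hst (.smul ?_ (hScont.clm_apply hg))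
    exact continuousOn_const.div (by fun_prop) fun r hr ↦ add_comm 1 r ▸ one_add_ne hr.1
  rw [integral_eq_sub_of_hasDerivAt_of_le hst (hScont.clm_apply hν) hderiv hint,
    stateTransition_self B (one_add_ne hst), one_apply_eq_self, add_sub_cancel]

end StateTransition

section LinearQSA

variable {E : Type*} [NormedAddCommGroup E] [NormedSpace ℝ E]

/-- The linear QSA process: `θ` solves `θ' = (1 / (t + 1)) • (A θ + ξ)` on `[0, ∞)`. The derivative
at `0` is the one-sided one, so `θ` is not constrained on negative times. -/
def IsLinearQSA (A : E →L[ℝ] E) (ξ θ : ℝ → E) : Prop :=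
  ∀ t, 0 ≤ t → HasDerivWithinAt θ ((1 / (t + 1)) • (A (θ t) + ξ t)) (Ici 0) t

/-- The second-order error `ν̃(t) = (t + 1) θ(t) - ξ^I(t)`, where `ξ^I(t) = ∫₀ᵗ ξ`. -/
noncomputable def secondOrderError (ξ θ : ℝ → E) (t : ℝ) : E :=
  (t + 1) • θ t - ∫ r in (0 : ℝ)..t, ξ r

theorem one_div_add_one_smul_secondOrderError_add (ξ θ : ℝ → E) {t : ℝ} (ht : t + 1 ≠ 0) :
    (1 / (t + 1)) • (secondOrderError ξ θ t + ∫ r in (0 : ℝ)..t, ξ r) = θ t := by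
  rw [secondOrderError, sub_add_cancel, smul_smul, one_div_mul_cancel ht, one_smul]

namespace IsLinearQSA

variable {A : E →L[ℝ] E} {ξ θ : ℝ → E} {t : ℝ}

theorem continuousOn (hθ : IsLinearQSA A ξ θ) : ContinuousOn θ (Ici 0) :=
  fun t ht ↦ (hθ t ht).continuousWithinAt

theorem hasDerivAt_add_one_smul (hθ : IsLinearQSA A ξ θ) (ht : 0 < t) :
    HasDerivAt (fun r ↦ (r + 1) • θ r) ((1 + A) (θ t) + ξ t) t := by
  have hθt := (hθ t ht.le).hasDerivAt (Ici_mem_nhds ht)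
  refine (((hasDerivAt_id' t).add_const 1).fun_smul hθt).congr_deriv ?_
  rw [smul_smul, mul_one_div_cancel (by positivity), add_apply, one_apply_eq_self]
  module

theorem continuousOn_secondOrderError (hθ : IsLinearQSA A ξ θ) (ht : 0 ≤ t)
    (hξ : IntervalIntegrable ξ volume 0 t) : ContinuousOn (secondOrderError ξ θ) (Icc 0 t) :=
  .sub (.smul (by fun_prop) (hθ.continuousOn.mono Icc_subset_Ici_self))
    (uIcc_of_le ht ▸ continuousOn_primitive_interval' hξ left_mem_uIcc)

variable [CompleteSpace E]

theorem secondOrderError_eq_integral (hθ : IsLinearQSA A ξ θ) (ht : 0 ≤ t)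
    (hξ : IntervalIntegrable ξ volume 0 t) :
    secondOrderError ξ θ t = θ 0 + ∫ r in (0 : ℝ)..t, (1 + A) (θ r) := by
  have hθcont : ContinuousOn θ (Icc 0 t) := hθ.continuousOn.mono Icc_subset_Ici_self
  have hAθ : IntervalIntegrable (fun r ↦ (1 + A) (θ r)) volume 0 t :=
    ((1 + A).continuous.comp_continuousOn hθcont).intervalIntegrable_of_Icc ht
  have hcont : ContinuousOn (fun r ↦ (r + 1) • θ r) (Icc 0 t) := .smul (by fun_prop) hθcont
  have hFTC := integral_eq_sub_of_hasDerivAt_of_le ht hcont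
    (fun r hr ↦ hθ.hasDerivAt_add_one_smul hr.1) (hAθ.add hξ)
  rw [integral_add hAθ hξ, zero_add, one_smul] at hFTC
  rw [secondOrderError, sub_eq_iff_eq_add, add_assoc, hFTC, add_sub_cancel]

theorem hasDerivAt_secondOrderError (hθ : IsLinearQSA A ξ θ) (hξ : IntervalIntegrable ξ volume 0 t)
    {r : ℝ} (hr : r ∈ Ioo 0 t) : HasDerivAt (secondOrderError ξ θ) ((1 + A) (θ r)) r := by
  have hAθ : ContinuousOn (fun r ↦ (1 + A) (θ r)) (Ici 0) :=
    (1 + A).continuous.comp_continuousOn hθ.continuousOn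
  have hint : IntervalIntegrable (fun r ↦ (1 + A) (θ r)) volume 0 r :=
    (hAθ.mono Icc_subset_Ici_self).intervalIntegrable_of_Icc hr.1.le
  have hprim := integral_hasDerivAt_right hint
    ⟨Ici 0, Ici_mem_nhds hr.1, hAθ.aestronglyMeasurable measurableSet_Ici⟩
    (hAθ.continuousAt (Ici_mem_nhds hr.1))
  refine (hprim.const_add (θ 0)).congr_of_eventuallyEq ?_
  filter_upwards [Icc_mem_nhds hr.1 hr.2] with u hu
  exact hθ.secondOrderError_eq_integral hu.1
    (hξ.mono_set (uIcc_subset_uIcc_left (Icc_subset_uIcc hu)))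

end IsLinearQSA

theorem second_order_error_representation_general [CompleteSpace E]
    {A : E →L[ℝ] E} {ξ θ : ℝ → E} {t : ℝ}
    (hθ : IsLinearQSA A ξ θ) (ht : 0 ≤ t) (hξ : IntervalIntegrable ξ volume 0 t) :
    secondOrderError ξ θ t = stateTransition (1 + A) t 0 (θ 0)
      + ∫ r in (0 : ℝ)..t,
          (1 / (r + 1)) • (stateTransition (1 + A) t r * (1 + A)) (∫ u in (0 : ℝ)..r, ξ u) := by
  have hξI : ContinuousOn (fun r ↦ ∫ u in (0 : ℝ)..r, ξ u) (Icc 0 t) :=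
    uIcc_of_le ht ▸ continuousOn_primitive_interval' hξ left_mem_uIcc
  have hν' : ∀ r ∈ Ioo 0 t, HasDerivAt (secondOrderError ξ θ) ((1 / (r + 1)) •
      ((1 + A) (secondOrderError ξ θ r) + (1 + A) (∫ u in (0 : ℝ)..r, ξ u))) r := fun r hr ↦ by
    rw [← map_add, ← map_smul,
      one_div_add_one_smul_secondOrderError_add ξ θ (by linarith [hr.1])]
    exact hθ.hasDerivAt_secondOrderError hξ hr
  have hν₀ : secondOrderError ξ θ 0 = θ 0 := by simp [secondOrderError]
  simpa only [hν₀, Function.comp_apply, mul_apply_eq_comp] using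
    eq_stateTransition_add_integral neg_one_lt_zero ht (hθ.continuousOn_secondOrderError ht hξ)
      ((1 + A).continuous.comp_continuousOn hξI) hν'

end LinearQSA

theorem toEuclideanCLM_exp {𝕜 n : Type*} [RCLike 𝕜] [Fintype n] [DecidableEq n]
    (M : Matrix n n 𝕜) :
    Matrix.toEuclideanCLM (n := n) (𝕜 := 𝕜) (NormedSpace.exp M) =
      NormedSpace.exp (Matrix.toEuclideanCLM (n := n) (𝕜 := 𝕜) M) := by
  -- `exp` sees only the topology of matrices, and the L² operator norm induces the entrywise one.
  open scoped Matrix.Norms.L2Operator in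
  let := NormedAlgebra.restrictScalars ℚ 𝕜 (Matrix n n 𝕜)
  exact NormedSpace.map_exp _
    (AddMonoidHomClass.isometry_of_norm _ Matrix.l2_opNorm_toEuclideanCLM).continuous M

/-- Variation-of-constants formula for the second-order error (Lemma 2, equation (32)):
`ν̃(t) = S(t;0) θ(0) + ∫₀^t (1/(r+1)) S(t;r) Ā ξ^I(r) dr`. -/
theorem second_order_error_representation
    (d : ℕ) (A Abar : Matrix (Fin d) (Fin d) ℝ) (hAbar : Abar = 1 + A)
    (S : ℝ → ℝ → Matrix (Fin d) (Fin d) ℝ)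
    (hS : ∀ t r, S t r = NormedSpace.exp (Real.log ((1 + t) / (1 + r)) • Abar))
    (ξ : ℝ → EuclideanSpace ℝ (Fin d)) (hξ : ContinuousOn ξ (Set.Ici 0))
    (ξI : ℝ → EuclideanSpace ℝ (Fin d)) (hξI : ∀ t, ξI t = ∫ r in (0:ℝ)..t, ξ r)
    (θ : ℝ → EuclideanSpace ℝ (Fin d))
    (hθ : ∀ t : ℝ, 0 ≤ t →
      HasDerivAt θ ((1 / (t + 1)) • (Matrix.toEuclideanLin A (θ t) + ξ t)) t)
    (νt : ℝ → EuclideanSpace ℝ (Fin d))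
    (hνt : ∀ t, νt t = (t + 1) • θ t - ξI t) :
    ∀ t : ℝ, 0 ≤ t →
      νt t = Matrix.toEuclideanLin (S t 0) (θ 0)
        + ∫ r in (0:ℝ)..t, (1 / (r + 1)) • Matrix.toEuclideanLin (S t r * Abar) (ξI r) := by
  intro t ht
  have hqsa : IsLinearQSA (Matrix.toEuclideanCLM (n := Fin d) (𝕜 := ℝ) A) ξ θ :=
    fun r hr ↦ (hθ r hr).hasDerivWithinAt
  have hrep := second_order_error_representation_general hqsa ht
    ((hξ.mono Icc_subset_Ici_self).intervalIntegrable_of_Icc ht)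
  simpa only [hνt, hξI, hS, hAbar, secondOrderError, stateTransition,
    ← Matrix.coe_toEuclideanCLM_eq_toEuclideanLin, ContinuousLinearMap.coe_coe,
    toEuclideanCLM_exp, map_mul, map_smul, map_add, map_one] using hrep
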